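/- For every odd n ≥ 3, the graph obtained from the cycle C_n by attaching a single pendant vertex (a new vertex joined by one edge to one cycle vertex) has nim-value 4 in graph chomp. -/

import Mathlib

/-!
A graph is encoded by its vertex set `X` and edge set `E`, and `cx X E` is the associated complex.

For a bipartite graph the nim-value is `|X| % 2 + 2 * (|E| % 2)` (`grundy_bipartite`). Deleting an
edge, an even vertex or an odd vertex changes this number by nim-adding `2`, `1` or `3`
respectively, so no move preserves it. Conversely the needed smaller values are reached: if `|E|`
is odd there is an odd vertex, because the degrees on one side of the bipartition add up to `|E|`,
and if `|X|` is odd there is an even vertex, because the sum of all degrees is even.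

Destroying one edge of an odd cycle with a pendant edge leaves a bipartite graph
(`bip_of_edge_removed`), so nearly all options are known from parities. This gives value `0` for
the odd cycle (options `1`, `2`), then value `1` for the odd cycle plus an isolated vertex
(options `0`, `3`). The options of the odd cycle with a pendant vertex are therefore: the cycle (`0`),
the cycle plus an isolated vertex (`1`), a tree with an even number of vertices (`2`), and, deleting
a cycle vertex, a forest of value `1` or, for the attaching vertex, `3`. The mex is `4`.
-/

attribute [local instance] Classical.propDecidable

/-- The minimal excludant of a finite set of naturals. -/
noncomputable def mex (s : Finset ℕ) : ℕ := sInf {n : ℕ | n ∉ s}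

/-- The position resulting from choosing `σ` in subset take-away:
remove `σ` together with every element containing it. -/
noncomputable def takeawayMove {V : Type*} [DecidableEq V] (Δ : Finset (Finset V))
    (σ : Finset V) : Finset (Finset V) :=
  Δ.filter (fun t => ¬ σ ⊆ t)

/-- The Grundy (nim-)value of subset take-away played on `Δ`: the minimal excludant of the
Grundy values of all positions reachable in one move. -/
noncomputable def grundy {V : Type*} [DecidableEq V] (Δ : Finset (Finset V)) : ℕ :=
  mex (Δ.attach.image (fun σ => grundy (takeawayMove Δ σ.1)))
termination_by Δ.card
decreasing_by
  simp only [takeawayMove]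
  exact Finset.card_lt_card (Finset.filter_ssubset.mpr ⟨σ.1, σ.2, by simp⟩)

/-- The graph `G_{m,k}` built on a cycle of length `c`, as a simplicial complex of vertices
and edges on the vertex set `{0, …, c + m + k}`: the vertices `0, …, c - 1` form the cycle,
the vertex `B = c` is joined by an edge to the cycle vertex `A = 0`, an `m`-tail
`c + 1, …, c + m` is attached at `B`, and a `k`-tail `c + m + 1, …, c + m + k` is attached
at `B`. -/
noncomputable def Gmk (c m k : ℕ) : Finset (Finset ℕ) :=
  ((Finset.range (c + 1 + m + k)).image (fun i => ({i} : Finset ℕ))) ∪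
    ((Finset.range c).image (fun i => ({i, (i + 1) % c} : Finset ℕ))) ∪
    ({({0, c} : Finset ℕ)} : Finset (Finset ℕ)) ∪
    ((Finset.range m).image (fun i => ({c + i, c + i + 1} : Finset ℕ))) ∪
    ((Finset.range k).image (fun i =>
      ({if i = 0 then c else c + m + i, c + m + i + 1} : Finset ℕ)))

/-! ### Graphs as complexes and their moves -/

/-- The one-dimensional complex with vertex set `X` and edge set `E`. -/
noncomputable def cx (X : Finset ℕ) (E : Finset (Finset ℕ)) : Finset (Finset ℕ) :=
  X.image (fun i => ({i} : Finset ℕ)) ∪ E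

/-- `E` is a set of edges of a simple graph on the vertex set `X`. -/
def IsEdges (X : Finset ℕ) (E : Finset (Finset ℕ)) : Prop :=
  ∀ t ∈ E, t.card = 2 ∧ t ⊆ X

/-- The edges left after deleting the vertex `a`. -/
noncomputable def delV (E : Finset (Finset ℕ)) (a : ℕ) : Finset (Finset ℕ) :=
  E.filter (fun t => a ∉ t)

/-- The number of edges of `E` containing `a`. -/
noncomputable def deg (E : Finset (Finset ℕ)) (a : ℕ) : ℕ :=
  (E.filter (fun t => a ∈ t)).card

/-- The set `E` of edges is bipartite: some vertex set `S` contains exactly one end of each edge. -/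
def Bip (E : Finset (Finset ℕ)) : Prop :=
  ∃ S : ℕ → Prop, ∀ t ∈ E, (t.filter S).card = 1

lemma Bip.mono {E F : Finset (Finset ℕ)} (h : Bip F) (hs : E ⊆ F) : Bip E := by
  obtain ⟨S, hS⟩ := h
  exact ⟨S, fun t ht => hS t (hs ht)⟩

lemma deg_add_delV (E : Finset (Finset ℕ)) (a : ℕ) : deg E a + (delV E a).card = E.card :=
  Finset.card_filter_add_card_filter_not _

lemma IsEdges.mono {X : Finset ℕ} {E F : Finset (Finset ℕ)} (h : IsEdges X F) (hs : E ⊆ F) :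
    IsEdges X E := fun t ht => h t (hs ht)

lemma IsEdges.delV {X : Finset ℕ} {E : Finset (Finset ℕ)} (h : IsEdges X E) (a : ℕ) :
    IsEdges (X.erase a) (delV E a) := by
  intro t ht
  obtain ⟨h1, h2⟩ := Finset.mem_filter.mp ht
  exact ⟨(h t h1).1, Finset.subset_erase.mpr ⟨(h t h1).2, h2⟩⟩

lemma move_edge {X : Finset ℕ} {E : Finset (Finset ℕ)} (h : IsEdges X E) {t : Finset ℕ}
    (ht : t ∈ E) : takeawayMove (cx X E) t = cx X (E.erase t) := by
  ext s
  simp only [takeawayMove, cx, Finset.mem_filter, Finset.mem_union, Finset.mem_image,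
    Finset.mem_erase]
  have h2 := (h t ht).1
  constructor
  · rintro ⟨h1 | h1, h3⟩
    · exact Or.inl h1
    · exact Or.inr ⟨fun e => h3 e.symm.subset, h1⟩
  · rintro (⟨a, ha, rfl⟩ | ⟨h1, h3⟩)
    · refine ⟨Or.inl ⟨a, ha, rfl⟩, fun hs => ?_⟩
      have := Finset.card_le_card hs
      simp at this
      omega
    · refine ⟨Or.inr h3, fun hs => h1 ?_⟩
      exact (Finset.eq_of_subset_of_card_le hs (by rw [h2, (h s h3).1])).symm

lemma move_vertex (X : Finset ℕ) (E : Finset (Finset ℕ)) (a : ℕ) :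
    takeawayMove (cx X E) {a} = cx (X.erase a) (delV E a) := by
  ext s
  simp only [takeawayMove, cx, delV, Finset.mem_filter, Finset.mem_union, Finset.mem_image,
    Finset.mem_erase, Finset.singleton_subset_iff]
  constructor
  · rintro ⟨⟨b, hb, rfl⟩ | h1, h3⟩
    · exact Or.inl ⟨b, ⟨fun e => h3 (by simp [e]), hb⟩, rfl⟩
    · exact Or.inr ⟨h1, h3⟩
  · rintro (⟨b, ⟨hab, hb⟩, rfl⟩ | ⟨h1, h3⟩)
    · exact ⟨Or.inl ⟨b, hb, rfl⟩, by simpa using Ne.symm hab⟩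
    · exact ⟨Or.inr h1, h3⟩

lemma mex_eq {s : Finset ℕ} {m : ℕ} (h1 : m ∉ s) (h2 : ∀ k < m, k ∈ s) : mex s = m := by
  unfold mex
  apply le_antisymm
  · exact Nat.sInf_le h1
  · refine le_csInf ⟨m, h1⟩ fun b hb => ?_
    by_contra hlt
    exact hb (h2 b (not_le.mp hlt))

/-- The nim-value is `m` as soon as no option has value `m` and all smaller values occur. -/
lemma grundy_cx {X : Finset ℕ} {E : Finset (Finset ℕ)} (h : IsEdges X E) {m : ℕ}
    (hE : ∀ t ∈ E, grundy (cx X (E.erase t)) ≠ m)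
    (hV : ∀ a ∈ X, grundy (cx (X.erase a) (delV E a)) ≠ m)
    (hlt : ∀ k < m, (∃ t ∈ E, grundy (cx X (E.erase t)) = k) ∨
      ∃ a ∈ X, grundy (cx (X.erase a) (delV E a)) = k) :
    grundy (cx X E) = m := by
  rw [grundy]
  apply mex_eq
  · simp only [Finset.mem_image, Finset.mem_attach, true_and, Subtype.exists, not_exists]
    intro s hs
    rcases Finset.mem_union.mp hs with hs | hs
    · obtain ⟨a, ha, rfl⟩ := Finset.mem_image.mp hs
      rw [move_vertex]
      exact hV a ha
    · rw [move_edge h hs]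
      exact hE s hs
  · intro k hk
    simp only [Finset.mem_image, Finset.mem_attach, true_and, Subtype.exists]
    rcases hlt k hk with ⟨t, ht, e⟩ | ⟨a, ha, e⟩
    · exact ⟨t, Finset.mem_union_right _ ht, by rw [move_edge h ht]; exact e⟩
    · exact ⟨{a}, Finset.mem_union_left _ (Finset.mem_image_of_mem _ ha),
        by rw [move_vertex]; exact e⟩

/-! ### Bipartite graphs -/

/-- If `S` contains exactly one end of each edge, the degrees in `S` add up to the number of
edges. -/
lemma sum_deg {X : Finset ℕ} {E : Finset (Finset ℕ)} (h : IsEdges X E) (S : ℕ → Prop)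
    [DecidablePred S] (hS : ∀ t ∈ E, (t.filter S).card = 1) : ∑ a ∈ X.filter S, deg E a = E.card := by
  have := Finset.sum_card_bipartiteAbove_eq_sum_card_bipartiteBelow
    (s := X.filter S) (t := E) (fun (a : ℕ) (t : Finset ℕ) => a ∈ t)
  simp only [Finset.bipartiteAbove, Finset.bipartiteBelow] at this
  unfold deg
  rw [this, Finset.card_eq_sum_ones]
  refine Finset.sum_congr rfl fun t ht => ?_
  rw [← hS t ht]
  congr 1
  ext a
  simp only [Finset.mem_filter]
  have := (h t ht).2
  constructor
  · rintro ⟨⟨_, h2⟩, h3⟩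
    exact ⟨h3, h2⟩
  · rintro ⟨h1, h2⟩
    exact ⟨⟨this h1, h2⟩, h1⟩

lemma exists_odd_deg {X : Finset ℕ} {E : Finset (Finset ℕ)} (h : IsEdges X E) (hb : Bip E)
    (ho : E.card % 2 = 1) : ∃ a ∈ X, deg E a % 2 = 1 := by
  obtain ⟨S, hS⟩ := hb
  by_contra hc
  push Not at hc
  have h1 := sum_deg h S hS
  have h2 : 2 ∣ ∑ a ∈ X.filter S, deg E a :=
    Finset.dvd_sum fun a ha => by
      have := hc a (Finset.mem_filter.mp ha).1
      omega
  omega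

lemma exists_even_deg {X : Finset ℕ} {E : Finset (Finset ℕ)} (h : IsEdges X E) (hb : Bip E)
    (ho : X.card % 2 = 1) : ∃ a ∈ X, deg E a % 2 = 0 := by
  obtain ⟨S, hS⟩ := hb
  by_contra hc
  push Not at hc
  have h1 := sum_deg h S hS
  have h2 := sum_deg h (fun a => ¬ S a) (fun t ht => by
    have h3 : (t.filter S).card + (t.filter (fun a => ¬ S a)).card = t.card := by
      convert Finset.card_filter_add_card_filter_not (s := t) S
    have h4 := hS t ht
    have h5 := (h t ht).1
    omega)
  have h3 : ∑ a ∈ X.filter S, deg E a + ∑ a ∈ X.filter (fun a => ¬ S a), deg E a =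
      ∑ a ∈ X, deg E a := by
    convert Finset.sum_filter_add_sum_filter_not X S (deg E)
  -- If all degrees were odd, their sum plus the number of vertices would be even.
  have h4 : 2 ∣ ∑ a ∈ X, (deg E a + 1) :=
    Finset.dvd_sum fun a ha => by
      have := hc a ha
      omega
  rw [Finset.sum_add_distrib, ← Finset.card_eq_sum_ones] at h4
  omega

/-- The nim-value of a bipartite graph is determined by the parities of its numbers of vertices and
edges; the variable `N` only serves the induction on the size of the graph. -/
theorem grundy_bipartite : ∀ (N : ℕ) (X : Finset ℕ) (E : Finset (Finset ℕ)),
    X.card + E.card = N → IsEdges X E → Bip E →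
      grundy (cx X E) = X.card % 2 + 2 * (E.card % 2) := by
  intro N
  induction N using Nat.strong_induction_on with
  | _ N ih =>
  intro X E hN h hb
  have hedge : ∀ t ∈ E, E.card ≠ 0 ∧
      grundy (cx X (E.erase t)) = X.card % 2 + 2 * ((E.card - 1) % 2) := by
    intro t ht
    have hpos := Finset.card_pos.mpr ⟨t, ht⟩
    have hc := Finset.card_erase_of_mem ht
    refine ⟨by omega, ?_⟩
    rw [← hc]
    exact ih _ (by omega) X _ rfl (h.mono (Finset.erase_subset _ _))
      (hb.mono (Finset.erase_subset _ _))
  have hvert : ∀ a ∈ X, X.card ≠ 0 ∧ grundy (cx (X.erase a) (delV E a)) =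
      (X.card - 1) % 2 + 2 * ((delV E a).card % 2) := by
    intro a ha
    have hpos := Finset.card_pos.mpr ⟨a, ha⟩
    have hc := Finset.card_erase_of_mem ha
    have hd := deg_add_delV E a
    refine ⟨by omega, ?_⟩
    rw [← hc]
    exact ih _ (by omega) _ _ rfl (h.delV a) (hb.mono (Finset.filter_subset _ _))
  apply grundy_cx h
  · intro t ht
    have := hedge t ht
    omega
  · intro a ha
    have := hvert a ha
    omega
  · intro k hk
    by_cases hE : E.card % 2 = 1
    · obtain ⟨t, ht⟩ := Finset.card_pos.mp (show 0 < E.card by omega)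
      obtain ⟨a, ha, hao⟩ := exists_odd_deg h hb hE
      have h1 := hedge t ht
      have h2 := hvert a ha
      have h3 := deg_add_delV E a
      by_cases hX : X.card % 2 = 1
      · obtain ⟨b, hbX, hbe⟩ := exists_even_deg h hb hX
        have h4 := hvert b hbX
        have h5 := deg_add_delV E b
        have : k = 0 ∨ k = 1 ∨ k = 2 := by omega
        rcases this with rfl | rfl | rfl
        · exact Or.inr ⟨a, ha, by omega⟩
        · exact Or.inl ⟨t, ht, by omega⟩
        · exact Or.inr ⟨b, hbX, by omega⟩
      · have : k = 0 ∨ k = 1 := by omega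
        rcases this with rfl | rfl
        · exact Or.inl ⟨t, ht, by omega⟩
        · exact Or.inr ⟨a, ha, by omega⟩
    · obtain ⟨b, hbX, hbe⟩ := exists_even_deg h hb (by omega)
      have h4 := hvert b hbX
      have h5 := deg_add_delV E b
      exact Or.inr ⟨b, hbX, by omega⟩

/-! ### The odd cycle with a pendant edge -/

/-- The `i`-th edge of the cycle on `0, …, n - 1`. -/
def cycEdge (n i : ℕ) : Finset ℕ := {i, (i + 1) % n}

/-- The edge set of the cycle on `0, …, n - 1`. -/
noncomputable def cyc (n : ℕ) : Finset (Finset ℕ) :=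
  (Finset.range n).image (cycEdge n)

/-- The edge set of the cycle with the pendant edge `{0, n}`. -/
noncomputable def pend (n : ℕ) : Finset (Finset ℕ) :=
  cyc n ∪ {({0, n} : Finset ℕ)}

lemma mod_cases {n i : ℕ} (hi : i < n) :
    (i + 1 < n ∧ (i + 1) % n = i + 1) ∨ (i + 1 = n ∧ (i + 1) % n = 0) := by
  rcases Nat.lt_or_ge (i + 1) n with h | h
  · exact Or.inl ⟨h, Nat.mod_eq_of_lt h⟩
  · have : i + 1 = n := by omega
    exact Or.inr ⟨this, by rw [this, Nat.mod_self]⟩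

lemma mem_cycEdge {n i x : ℕ} : x ∈ cycEdge n i ↔ x = i ∨ x = (i + 1) % n := by
  simp [cycEdge]

lemma cycEdge_inj {n i j : ℕ} (hn : 3 ≤ n) (hi : i < n) (hj : j < n)
    (h : cycEdge n i = cycEdge n j) : i = j := by
  have h1 : i ∈ cycEdge n j := h ▸ mem_cycEdge.mpr (Or.inl rfl)
  have h2 : (i + 1) % n ∈ cycEdge n j := h ▸ mem_cycEdge.mpr (Or.inr rfl)
  rw [mem_cycEdge] at h1 h2
  have := mod_cases hi
  have := mod_cases hj
  omega

lemma card_cyc {n : ℕ} (hn : 3 ≤ n) : (cyc n).card = n := by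
  unfold cyc
  rw [Finset.card_image_of_injOn, Finset.card_range]
  intro i hi j hj h
  simp only [Finset.coe_range, Set.mem_Iio] at hi hj
  exact cycEdge_inj hn hi hj h

lemma mem_cyc {n : ℕ} {t : Finset ℕ} : t ∈ cyc n ↔ ∃ i < n, cycEdge n i = t := by
  simp [cyc]

lemma not_mem_of_mem_cyc {n : ℕ} {t : Finset ℕ} (ht : t ∈ cyc n) : n ∉ t := by
  obtain ⟨i, hi, rfl⟩ := mem_cyc.mp ht
  rw [mem_cycEdge]
  have := mod_cases hi
  omega

lemma pendant_not_mem_cyc (n : ℕ) : ({0, n} : Finset ℕ) ∉ cyc n :=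
  fun h => not_mem_of_mem_cyc h (by simp)

lemma card_pend {n : ℕ} (hn : 3 ≤ n) : (pend n).card = n + 1 := by
  unfold pend
  rw [Finset.card_union_of_disjoint (by simpa using pendant_not_mem_cyc n), card_cyc hn]
  simp

lemma deg_cyc {n i : ℕ} (hn : 3 ≤ n) (hi : i < n) : deg (cyc n) i = 2 := by
  -- The two edges at `i` are the one starting and the one ending there.
  obtain ⟨j, hj, hji⟩ : ∃ j < n, (j + 1) % n = i := by
    rcases Nat.eq_zero_or_pos i with rfl | h
    · exact ⟨n - 1, by omega, by rw [Nat.sub_add_cancel (by omega), Nat.mod_self]⟩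
    · exact ⟨i - 1, by omega, by rw [Nat.sub_add_cancel h, Nat.mod_eq_of_lt hi]⟩
  have hjc := mod_cases hj
  have key : (cyc n).filter (fun t => i ∈ t) = {cycEdge n i, cycEdge n j} := by
    ext t
    simp only [Finset.mem_filter, mem_cyc, Finset.mem_insert, Finset.mem_singleton]
    constructor
    · rintro ⟨⟨k, hk, rfl⟩, h⟩
      rw [mem_cycEdge] at h
      rcases h with rfl | h
      · exact Or.inl rfl
      · right
        have := mod_cases hk
        congr 1
        omega
    · rintro (rfl | rfl)
      · exact ⟨⟨i, hi, rfl⟩, mem_cycEdge.mpr (Or.inl rfl)⟩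
      · exact ⟨⟨j, hj, rfl⟩, mem_cycEdge.mpr (Or.inr hji.symm)⟩
  unfold deg
  rw [key, Finset.card_pair]
  intro h
  have := cycEdge_inj hn hi hj h
  omega

lemma deg_pend {n i : ℕ} (hn : 3 ≤ n) (hi : i < n) :
    deg (pend n) i = if i = 0 then 3 else 2 := by
  have h2 := deg_cyc hn hi
  unfold deg at h2 ⊢
  unfold pend
  rw [Finset.filter_union, Finset.filter_singleton]
  split_ifs with h h0 h0
  · rw [Finset.card_union_of_disjoint, h2]
    · simp
    · rw [Finset.disjoint_singleton_right]
      exact fun h => pendant_not_mem_cyc n (Finset.mem_filter.mp h).1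
  · simp at h
    omega
  · simp [h0] at h
  · simpa using h2

lemma isEdges_pend {n : ℕ} (hn : 3 ≤ n) : IsEdges (Finset.range (n + 1)) (pend n) := by
  intro t ht
  rcases Finset.mem_union.mp ht with ht | ht
  · obtain ⟨i, hi, rfl⟩ := mem_cyc.mp ht
    have := mod_cases hi
    refine ⟨Finset.card_pair (by omega), fun x hx => ?_⟩
    rw [mem_cycEdge] at hx
    rw [Finset.mem_range]
    omega
  · rw [Finset.mem_singleton] at ht
    subst ht
    refine ⟨Finset.card_pair (by omega), fun x hx => ?_⟩
    simp at hx
    rw [Finset.mem_range]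
    omega

lemma isEdges_cyc {n : ℕ} (hn : 3 ≤ n) : IsEdges (Finset.range n) (cyc n) := by
  intro t ht
  obtain ⟨i, hi, rfl⟩ := mem_cyc.mp ht
  have := mod_cases hi
  refine ⟨Finset.card_pair (by omega), fun x hx => ?_⟩
  rw [mem_cycEdge] at hx
  rw [Finset.mem_range]
  omega

lemma card_filter_pair {a b : ℕ} (S : ℕ → Prop) (h : (S a ∧ ¬ S b) ∨ (¬ S a ∧ S b)) :
    (({a, b} : Finset ℕ).filter S).card = 1 := by
  rw [Finset.filter_insert, Finset.filter_singleton]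
  rcases h with ⟨h1, h2⟩ | ⟨h1, h2⟩ <;> simp [h1, h2]

/-- The pendant odd cycle becomes bipartite once the cycle edge `i` is missing. The colour class
consists of the even vertices up to `i` and the odd vertices of the cycle after `i`. -/
lemma bip_of_edge_removed {n i : ℕ} (hodd : n % 2 = 1) (hi : i < n) {E : Finset (Finset ℕ)}
    (hE : E ⊆ pend n) (hne : cycEdge n i ∉ E) : Bip E := by
  refine ⟨fun j => j < n ∧ ((j ≤ i ∧ j % 2 = 0) ∨ (i < j ∧ j % 2 = 1)), fun t ht => ?_⟩
  rcases Finset.mem_union.mp (hE ht) with h | h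
  · obtain ⟨j, hj, rfl⟩ := mem_cyc.mp h
    have hij : j ≠ i := fun e => hne (e ▸ ht)
    have := mod_cases hj
    apply card_filter_pair
    omega
  · rw [Finset.mem_singleton] at h
    subst h
    apply card_filter_pair
    omega

/-- The edge `i` of the cycle contains the vertex `i`, so it disappears with it. -/
lemma cycEdge_not_mem_delV (E : Finset (Finset ℕ)) (n i : ℕ) : cycEdge n i ∉ delV E i :=
  fun h => (Finset.mem_filter.mp h).2 (mem_cycEdge.mpr (Or.inl rfl))

/-- A subgraph of the pendant odd cycle that misses a cycle edge has the bipartite value. -/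
lemma grundy_broken {n i : ℕ} (hodd : n % 2 = 1) (hi : i < n) {X : Finset ℕ}
    {E : Finset (Finset ℕ)} (h : IsEdges X E) (hE : E ⊆ pend n) (hne : cycEdge n i ∉ E) :
    grundy (cx X E) = X.card % 2 + 2 * (E.card % 2) :=
  grundy_bipartite _ X E rfl h (bip_of_edge_removed hodd hi hE hne)

lemma cyc_subset_pend (n : ℕ) : cyc n ⊆ pend n := Finset.subset_union_left

lemma grundy_cycle {n : ℕ} (hn : 3 ≤ n) (hodd : n % 2 = 1) :
    grundy (cx (Finset.range n) (cyc n)) = 0 := by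
  have hc := card_cyc hn
  have h := isEdges_cyc hn
  apply grundy_cx h
  · intro t ht
    obtain ⟨i, hi, rfl⟩ := mem_cyc.mp ht
    rw [grundy_broken hodd hi (h.mono (Finset.erase_subset _ _))
      ((Finset.erase_subset _ _).trans (cyc_subset_pend n)) (Finset.notMem_erase _ _),
      Finset.card_range]
    omega
  · intro a ha
    have ha' := Finset.mem_range.mp ha
    have hd := deg_add_delV (cyc n) a
    rw [deg_cyc hn ha'] at hd
    rw [grundy_broken hodd ha' (h.delV a)
      ((Finset.filter_subset _ _).trans (cyc_subset_pend n)) (cycEdge_not_mem_delV _ _ _)]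
    omega
  · intro k hk
    omega

lemma range_succ_erase (n : ℕ) : (Finset.range (n + 1)).erase n = Finset.range n := by
  ext x
  simp
  omega

lemma delV_cyc_last (n : ℕ) : delV (cyc n) n = cyc n :=
  Finset.filter_true_of_mem fun _ ht => not_mem_of_mem_cyc ht

lemma delV_pend_last (n : ℕ) : delV (pend n) n = cyc n := by
  have h := delV_cyc_last n
  unfold delV at h ⊢
  unfold pend
  rw [Finset.filter_union, h, Finset.filter_singleton]
  simp

lemma grundy_cycle_isolated {n : ℕ} (hn : 3 ≤ n) (hodd : n % 2 = 1) :
    grundy (cx (Finset.range (n + 1)) (cyc n)) = 1 := by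
  have hc := card_cyc hn
  have h := (isEdges_pend hn).mono (cyc_subset_pend n)
  apply grundy_cx h
  · intro t ht
    obtain ⟨i, hi, rfl⟩ := mem_cyc.mp ht
    rw [grundy_broken hodd hi (h.mono (Finset.erase_subset _ _))
      ((Finset.erase_subset _ _).trans (cyc_subset_pend n)) (Finset.notMem_erase _ _),
      Finset.card_range]
    omega
  · intro a ha
    rcases Nat.lt_or_ge a n with ha' | ha'
    · have hd := deg_add_delV (cyc n) a
      rw [deg_cyc hn ha'] at hd
      rw [grundy_broken hodd ha' (h.delV a)
        ((Finset.filter_subset _ _).trans (cyc_subset_pend n)) (cycEdge_not_mem_delV _ _ _)]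
      omega
    · have : a = n := by
        have := Finset.mem_range.mp ha
        omega
      subst this
      rw [range_succ_erase, delV_cyc_last, grundy_cycle hn hodd]
      omega
  · intro k hk
    refine Or.inr ⟨n, by simp, ?_⟩
    rw [range_succ_erase, delV_cyc_last, grundy_cycle hn hodd]
    omega

lemma grundy_pend {n : ℕ} (hn : 3 ≤ n) (hodd : n % 2 = 1) :
    grundy (cx (Finset.range (n + 1)) (pend n)) = 4 := by
  have hc := card_pend hn
  have h := isEdges_pend hn
  have hcyc : ∀ i < n,
      grundy (cx (Finset.range (n + 1)) ((pend n).erase (cycEdge n i))) = 2 := by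
    intro i hi
    have hm : cycEdge n i ∈ pend n := cyc_subset_pend n (mem_cyc.mpr ⟨i, hi, rfl⟩)
    rw [grundy_broken hodd hi (h.mono (Finset.erase_subset _ _))
      (Finset.erase_subset _ _) (Finset.notMem_erase _ _),
      Finset.card_range, Finset.card_erase_of_mem hm]
    omega
  have hpe : grundy (cx (Finset.range (n + 1)) ((pend n).erase {0, n})) = 1 := by
    have : (pend n).erase {0, n} = cyc n := by
      unfold pend
      rw [Finset.union_comm, ← Finset.insert_eq, Finset.erase_insert (pendant_not_mem_cyc n)]
    rw [this, grundy_cycle_isolated hn hodd]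
  have hv : ∀ a < n, grundy (cx ((Finset.range (n + 1)).erase a) (delV (pend n) a)) =
      if a = 0 then 3 else 1 := by
    intro a ha
    have hd := deg_add_delV (pend n) a
    rw [deg_pend hn ha] at hd
    rw [grundy_broken hodd ha (h.delV a) (Finset.filter_subset _ _)
      (cycEdge_not_mem_delV _ _ _), Finset.card_erase_of_mem (Finset.mem_range.mpr (by omega)),
      Finset.card_range]
    split_ifs at hd ⊢ <;> omega
  have hlast : grundy (cx ((Finset.range (n + 1)).erase n) (delV (pend n) n)) = 0 := by
    rw [range_succ_erase, delV_pend_last, grundy_cycle hn hodd]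
  apply grundy_cx h
  · intro t ht
    rcases Finset.mem_union.mp ht with ht | ht
    · obtain ⟨i, hi, rfl⟩ := mem_cyc.mp ht
      rw [hcyc i hi]
      omega
    · rw [Finset.mem_singleton] at ht
      subst ht
      rw [hpe]
      omega
  · intro a ha
    rcases Nat.lt_or_ge a n with ha' | ha'
    · rw [hv a ha']
      split_ifs <;> omega
    · have : a = n := by
        have := Finset.mem_range.mp ha
        omega
      subst this
      rw [hlast]
      omega
  · intro k hk
    have : k = 0 ∨ k = 1 ∨ k = 2 ∨ k = 3 := by omega
    rcases this with rfl | rfl | rfl | rfl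
    · exact Or.inr ⟨n, by simp, hlast⟩
    · exact Or.inl ⟨{0, n}, Finset.mem_union_right _ (Finset.mem_singleton_self _), hpe⟩
    · exact Or.inl ⟨cycEdge n 0,
        cyc_subset_pend n (mem_cyc.mpr ⟨0, by omega, rfl⟩), hcyc 0 (by omega)⟩
    · exact Or.inr ⟨0, by simp, by rw [hv 0 (by omega), if_pos rfl]⟩

/-- For every odd `n ≥ 3`, the graph obtained from the cycle `C_n` by
attaching a single pendant vertex to one cycle vertex (which is exactly `G_{0,0}` built on a
cycle of length `n`) has nim-value `4` in graph chomp. -/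
theorem grundy_odd_cycle_pendant (n : ℕ) (hn : 3 ≤ n) (hodd : Odd n) :
    grundy (Gmk n 0 0) = 4 := by
  have key : Gmk n 0 0 = cx (Finset.range (n + 1)) (pend n) := by
    simp only [Gmk, cx, pend, cyc, Finset.range_zero, Finset.image_empty, Finset.union_empty,
      add_zero, Finset.union_assoc]
    rfl
  rw [key]
  exact grundy_pend hn (Nat.odd_iff.mp hodd)
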